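/- Let t0 > 0, let λ ≥ 0, and let b : [t0,∞) → ℝ be a measurable function such that m/t ≤ b(t) ≤ M/t for every t ≥ t0, where M ≥ m > 0 are real constants. Set μ := min{m, 2}. Then every solution u of the damped oscillator equation u'' + b(t)u' + λ²u = 0 satisfies u'(t)² + λ²u(t)² ≤ e^{m(M+8)}·{4u'(t0)² + (λ² + 2/t0²)u(t0)²}·(t0/t)^μ for every t ≥ t0. -/

import Mathlib

open Real Set Filter MeasureTheory intervalIntegral

/-- A solution of the damped oscillator equation `u'' + b(t) u' + λ² u = 0` on `[t0, ∞)`: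
a `C¹` function `u` (with derivative `u'`) whose derivative is locally absolutely continuous
(i.e. it is the integral of a locally integrable function `w`) and which satisfies the
equation almost everywhere on `[t0, ∞)`. -/
def IsDampedSol (t0 : ℝ) (b : ℝ → ℝ) (lam : ℝ) (u u' : ℝ → ℝ) : Prop :=
  (∀ t ∈ Ici t0, HasDerivAt u (u' t) t) ∧
  ContinuousOn u' (Ici t0) ∧
  ∃ w : ℝ → ℝ,
    (∀ T ≥ t0, IntervalIntegrable w volume t0 T) ∧
    (∀ t ∈ Ici t0, u' t = u' t0 + ∫ s in t0..t, w s) ∧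
    (∀ᵐ t ∂(volume.restrict (Ici t0)), w t + b t * u' t + lam ^ 2 * u t = 0)


lemma ac_antitone {f : ℝ → ℝ} {a c : ℝ} (hac : a ≤ c)
    (hf : AbsolutelyContinuousOnInterval f a c)
    (hd : ∀ᵐ x, x ∈ Icc a c → ∃ d, HasDerivAt f d x ∧ d ≤ 0) : f c ≤ f a := by
  have h := hf.integral_deriv_eq_sub
  have h2 : 0 ≤ ∫ x in a..c, -deriv f x := by
    apply intervalIntegral.integral_nonneg_of_ae_restrict hac
    rw [EventuallyLE, ae_restrict_iff' measurableSet_Icc]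
    filter_upwards [hd] with x hx hxm
    obtain ⟨d, h1, h2⟩ := hx hxm
    simp only [Pi.zero_apply, h1.deriv]
    linarith
  rw [intervalIntegral.integral_neg, h] at h2
  linarith

lemma ac_abs {f : ℝ → ℝ} {a c : ℝ}
    (hf : AbsolutelyContinuousOnInterval f a c) :
    AbsolutelyContinuousOnInterval (fun x => |f x|) a c := by
  apply squeeze_zero (fun t ↦ ?_) (fun t ↦ ?_) hf
  · exact Finset.sum_nonneg (fun i hi ↦ by positivity)
  · gcongr
    simp only [Real.dist_eq]
    exact abs_abs_sub_abs_le _ _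

lemma ac_smooth {f : ℝ → ℝ} {a c : ℝ} (ha : 0 < a) (hac : a ≤ c)
    (hf : ∀ x, 0 < x → ContDiffAt ℝ 1 f x) : AbsolutelyContinuousOnInterval f a c := by
  apply ContDiffOn.absolutelyContinuousOnInterval
  intro x hx
  rw [uIcc_of_le hac] at hx
  exact (hf x (lt_of_lt_of_le ha hx.1)).contDiffWithinAt

lemma ac_rpow {a c : ℝ} (ha : 0 < a) (hac : a ≤ c) (μ : ℝ) :
    AbsolutelyContinuousOnInterval (fun x : ℝ => x ^ μ) a c :=
  ac_smooth ha hac (fun x hx => Real.contDiffAt_rpow_const_of_ne hx.ne')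

lemma ac_inv {a c : ℝ} (ha : 0 < a) (hac : a ≤ c) :
    AbsolutelyContinuousOnInterval (fun x : ℝ => x⁻¹) a c :=
  ac_smooth ha hac (fun x hx => contDiffAt_inv ℝ hx.ne')

/-- local data of a solution on a compact interval -/
def LocSol (a c m M lam : ℝ) (u y : ℝ → ℝ) : Prop :=
  AbsolutelyContinuousOnInterval u a c ∧ AbsolutelyContinuousOnInterval y a c ∧
  ∀ᵐ x, x ∈ Icc a c → HasDerivAt u (y x) x ∧ ∃ β, m ≤ β ∧ β ≤ M ∧
    HasDerivAt y (-(β / x) * y x - lam ^ 2 * u x) x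

lemma hasDerivAt_rpow' {x : ℝ} (hx : 0 < x) (μ : ℝ) :
    HasDerivAt (fun x : ℝ => x ^ μ) (μ * x ^ μ / x) x := by
  have := Real.hasDerivAt_rpow_const (x := x) (p := μ) (Or.inl hx.ne')
  rw [Real.rpow_sub_one hx.ne'] at this
  convert this using 1
  ring

lemma phaseP {a c m M lam μ : ℝ} {u y : ℝ → ℝ} (ha : 0 < a) (hac : a ≤ c)
    (hμ : 0 < μ) (hμ1 : μ ≤ 1) (hμm : μ ≤ m) (hlam : 0 ≤ lam) (hc : lam * c ≤ 1 / 2)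
    (hs : LocSol a c m M lam u y) :
    c ^ μ * (y c ^ 2 + lam ^ 2 * u c ^ 2 + μ / 2 * (u c * c⁻¹) ^ 2) ≤
    a ^ μ * (y a ^ 2 + lam ^ 2 * u a ^ 2 + μ / 2 * (u a * a⁻¹) ^ 2) := by
  obtain ⟨hu, hy, hd⟩ := hs
  apply ac_antitone (f := fun x => x ^ μ * (y x ^ 2 + lam ^ 2 * u x ^ 2 + μ / 2 * (u x * x⁻¹) ^ 2)) hac
  · simp only [pow_two]
    exact (ac_rpow ha hac μ).fun_mul (((hy.fun_mul hy).fun_add ((hu.fun_mul hu).const_mul _)).fun_add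
      (((hu.fun_mul (ac_inv ha hac)).fun_mul (hu.fun_mul (ac_inv ha hac))).const_mul _))
  · filter_upwards [hd] with x hx hxm
    obtain ⟨h1, β, hβ1, hβ2, h2⟩ := hx hxm
    have hx0 : 0 < x := lt_of_lt_of_le ha hxm.1
    refine ⟨_, (hasDerivAt_rpow' hx0 μ).mul (((h2.pow 2).add ((h1.pow 2).const_mul _)).add
      (((h1.mul (hasDerivAt_inv hx0.ne')).pow 2).const_mul _)), ?_⟩
    have hp : 0 < x ^ μ := Real.rpow_pos_of_pos hx0 μ
    have hτ : lam * x ≤ 1 / 2 := le_trans (by gcongr; exact hxm.2) hc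
    have hτ0 : 0 ≤ lam * x := by positivity
    have hτ2 : (lam * x) ^ 2 ≤ 1 / 4 := by nlinarith
    set z := u x / x with hz
    have huz : u x = z * x := by rw [hz]; field_simp
    simp only [Pi.add_apply, Pi.mul_apply, Pi.pow_apply, huz]
    have key : (μ - 2 * β) * y x ^ 2 + μ * (y x * z) - (2 - μ) * (μ / 2) * z ^ 2
        + μ * (lam * x) ^ 2 * z ^ 2 ≤ 0 := by
      nlinarith [mul_nonneg hμ.le (sq_nonneg (y x - z / 2)),
        mul_nonneg (mul_nonneg hμ.le (sub_nonneg.2 hτ2)) (sq_nonneg z),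
        mul_nonneg (mul_nonneg hμ.le (sub_nonneg.2 hμ1)) (sq_nonneg z),
        mul_nonneg (sub_nonneg.2 (hμm.trans hβ1)) (sq_nonneg (y x))]
    have : 0 ≤ x ^ μ / x * -((μ - 2 * β) * y x ^ 2 + μ * (y x * z) - (2 - μ) * (μ / 2) * z ^ 2
        + μ * (lam * x) ^ 2 * z ^ 2) := mul_nonneg (by positivity) (by linarith)
    refine le_of_eq_of_le ?_ (neg_nonpos.2 this)
    push_cast
    field_simp
    ring

lemma phaseG {a c m M lam μ : ℝ} {u y : ℝ → ℝ} (ha : 0 < a) (hac : a ≤ c)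
    (hμ : 0 < μ) (hμ1 : μ ≤ 2) (hμm : μ ≤ m) (hlam : 0 < lam) 
    (hs : LocSol a c m M lam u y) :
    c ^ μ * (y c ^ 2 + lam ^ 2 * u c ^ 2 + μ * (y c * (u c * c⁻¹)) + μ / 2 * (u c * c⁻¹) ^ 2)
      * exp (M * μ ^ 2 / (16 * lam ^ 2) * (c⁻¹) ^ 2) ≤
    a ^ μ * (y a ^ 2 + lam ^ 2 * u a ^ 2 + μ * (y a * (u a * a⁻¹)) + μ / 2 * (u a * a⁻¹) ^ 2)
      * exp (M * μ ^ 2 / (16 * lam ^ 2) * (a⁻¹) ^ 2) := by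
  obtain ⟨hu, hy, hd⟩ := hs
  apply ac_antitone (f := fun x => x ^ μ * (y x ^ 2 + lam ^ 2 * u x ^ 2 + μ * (y x * (u x * x⁻¹))
     + μ / 2 * (u x * x⁻¹) ^ 2) * exp (M * μ ^ 2 / (16 * lam ^ 2) * (x⁻¹) ^ 2)) hac
  · have he : AbsolutelyContinuousOnInterval
        (fun x => exp (M * μ ^ 2 / (16 * lam ^ 2) * (x⁻¹) ^ 2)) a c := by
      apply ac_smooth ha hac
      intro x hx
      exact (contDiffAt_const.mul ((contDiffAt_inv ℝ hx.ne').pow 2)).exp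
    refine AbsolutelyContinuousOnInterval.fun_mul ?_ he
    simp only [pow_two]
    exact (ac_rpow ha hac μ).fun_mul ((((hy.fun_mul hy).fun_add ((hu.fun_mul hu).const_mul _)).fun_add
      ((hy.fun_mul (hu.fun_mul (ac_inv ha hac))).const_mul _)).fun_add
      (((hu.fun_mul (ac_inv ha hac)).fun_mul (hu.fun_mul (ac_inv ha hac))).const_mul _))
  · filter_upwards [hd] with x hx hxm
    obtain ⟨h1, β, hβ1, hβ2, h2⟩ := hx hxm
    have hx0 : 0 < x := lt_of_lt_of_le ha hxm.1
    have hzz := h1.mul (hasDerivAt_inv hx0.ne')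
    refine ⟨_, ((hasDerivAt_rpow' hx0 μ).mul ((((h2.pow 2).add ((h1.pow 2).const_mul _)).add
      ((h2.mul hzz).const_mul μ)).add
      ((hzz.pow 2).const_mul _))).mul
      (((hasDerivAt_inv hx0.ne').pow 2).const_mul (M * μ ^ 2 / (16 * lam ^ 2))).exp, ?_⟩
    have hp : 0 < x ^ μ := Real.rpow_pos_of_pos hx0 μ
    set z := u x / x with hz
    have huz : u x = z * x := by rw [hz]; field_simp
    simp only [Pi.add_apply, Pi.mul_apply, Pi.pow_apply, Pi.inv_apply, huz]
    set e := exp (M * μ ^ 2 / (16 * lam ^ 2) * (x⁻¹) ^ 2) with he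
    have he0 : 0 < e := exp_pos _
    have hM : 0 < M := by linarith
    set G := y x ^ 2 + lam ^ 2 * (z * x) ^ 2 + μ * (y x * z) + μ / 2 * z ^ 2 with hG
    have hGz : 0 ≤ G - lam ^ 2 * (z * x) ^ 2 := by
      rw [hG]
      nlinarith [sq_nonneg (y x + μ / 2 * z),
        mul_nonneg (mul_nonneg hμ.le (sub_nonneg.2 hμ1)) (sq_nonneg z)]
    have key : (2 * μ - 2 * β) * y x ^ 2 + (μ ^ 2 - μ * β) * (y x * z) - (2 - μ) * (μ / 2) * z ^ 2
        - M * μ ^ 2 / 8 * z ^ 2 ≤ 0 := by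
      nlinarith [mul_nonneg (sub_nonneg.2 (hμm.trans hβ1)) (sq_nonneg (y x + μ / 4 * z)),
        mul_nonneg (mul_nonneg hμ.le (sub_nonneg.2 hμ1)) (sq_nonneg z),
        mul_nonneg (mul_nonneg (sq_nonneg μ) (sub_nonneg.2 hβ2)) (sq_nonneg z),
        mul_nonneg (mul_nonneg (sq_nonneg μ) hμ.le) (sq_nonneg z)]
    have key2 : 0 ≤ M * μ ^ 2 / (8 * lam ^ 2 * x ^ 2) * (G - lam ^ 2 * (z * x) ^ 2) :=
      mul_nonneg (by positivity) hGz
    have : 0 ≤ x ^ μ / x * e * (-((2 * μ - 2 * β) * y x ^ 2 + (μ ^ 2 - μ * β) * (y x * z)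
        - (2 - μ) * (μ / 2) * z ^ 2
        - M * μ ^ 2 / 8 * z ^ 2) + M * μ ^ 2 / (8 * lam ^ 2 * x ^ 2) * (G - lam ^ 2 * (z * x) ^ 2)) :=
      mul_nonneg (by positivity) (by linarith)
    refine le_of_eq_of_le ?_ (neg_nonpos.2 this)
    rw [hG]
    push_cast
    field_simp
    ring

lemma phaseW {a c m M lam ν : ℝ} {u y : ℝ → ℝ} (ha : 0 < a) (hac : a ≤ c)
    (hν : 1 / 2 ≤ ν) (hν1 : ν ≤ 1) (hμm : 2 * ν ≤ m) 
    (hs : LocSol a c m M lam u y) :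
    c ^ ν * (|u c| * c⁻¹ + 2 * |y c|) * exp (-lam ^ 2 * (c * c)) ≤
    a ^ ν * (|u a| * a⁻¹ + 2 * |y a|) * exp (-lam ^ 2 * (a * a)) := by
  obtain ⟨hu, hy, hd⟩ := hs
  have hu' := ac_abs hu
  have hy' := ac_abs hy
  apply ac_antitone
    (f := fun x => x ^ ν * (|u x| * x⁻¹ + 2 * |y x|) * exp (-lam ^ 2 * (x * x))) hac
  · have he : AbsolutelyContinuousOnInterval (fun x => exp (-lam ^ 2 * (x * x))) a c := by
      apply ac_smooth ha hac
      intro x hx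
      fun_prop
    exact ((ac_rpow ha hac ν).fun_mul ((hu'.fun_mul (ac_inv ha hac)).fun_add
      (hy'.const_mul 2))).fun_mul he
  · filter_upwards [hd, hu'.ae_differentiableAt, hy'.ae_differentiableAt] with x hx hxu hxy hxm
    obtain ⟨h1, β, hβ1, hβ2, h2⟩ := hx hxm
    have hxm' : x ∈ uIcc a c := by rwa [uIcc_of_le hac]
    have hx0 : 0 < x := lt_of_lt_of_le ha hxm.1
    obtain ⟨du, h3, hdu⟩ : ∃ d, HasDerivAt (fun x => |u x|) d x ∧ d ≤ |y x| := by
      refine ⟨_, (hxu hxm').hasDerivAt, ?_⟩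
      rcases eq_or_ne (u x) 0 with h0 | h0
      · have : IsLocalMin (fun x => |u x|) x := by
          refine Eventually.of_forall fun s => ?_
          simp [h0]
        rw [this.deriv_eq_zero]; positivity
      · rcases lt_or_gt_of_ne h0 with h | h
        · have := (hasDerivAt_abs_neg h).comp x h1
          change deriv (abs ∘ u) x ≤ _
          rw [this.deriv]
          linarith [neg_abs_le (y x)]
        · have := (hasDerivAt_abs_pos h).comp x h1
          change deriv (abs ∘ u) x ≤ _
          rw [this.deriv]
          linarith [le_abs_self (y x)]
    obtain ⟨dy, h4, hdy⟩ : ∃ d, HasDerivAt (fun x => |y x|) d x ∧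
        d ≤ -(β / x) * |y x| + lam ^ 2 * |u x| := by
      refine ⟨_, (hxy hxm').hasDerivAt, ?_⟩
      rcases eq_or_ne (y x) 0 with h0 | h0
      · have : IsLocalMin (fun x => |y x|) x := by
          refine Eventually.of_forall fun s => ?_
          simp [h0]
        rw [this.deriv_eq_zero, h0]; simp; positivity
      · rcases lt_or_gt_of_ne h0 with h | h
        · have := (hasDerivAt_abs_neg h).comp x h2
          change deriv (abs ∘ y) x ≤ _
          rw [this.deriv, abs_of_neg h]
          nlinarith [le_abs_self (u x), sq_nonneg lam]
        · have := (hasDerivAt_abs_pos h).comp x h2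
          change deriv (abs ∘ y) x ≤ _
          rw [this.deriv, abs_of_pos h]
          nlinarith [neg_abs_le (u x), sq_nonneg lam]
    refine ⟨_, ((hasDerivAt_rpow' hx0 ν).mul ((h3.mul (hasDerivAt_inv hx0.ne')).add
      (h4.const_mul 2))).mul (((hasDerivAt_id x).mul (hasDerivAt_id x)).const_mul (-lam ^ 2)).exp, ?_⟩
    have hp : 0 < x ^ ν := Real.rpow_pos_of_pos hx0 ν
    simp only [Pi.add_apply, Pi.mul_apply, id]
    set e := exp (-lam ^ 2 * (x * x)) with he
    have he0 : 0 < e := exp_pos _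
    set U := |u x| with hU
    set Y := |y x| with hY
    have hU0 : 0 ≤ U := abs_nonneg _
    have hY0 : 0 ≤ Y := abs_nonneg _
    have key : ν * (U * x⁻¹ + 2 * Y) * x⁻¹ + du * x⁻¹ - U * x⁻¹ * x⁻¹ + 2 * dy
        - 2 * lam ^ 2 * x * (U * x⁻¹ + 2 * Y) ≤ 0 := by
      have hi : 0 < x⁻¹ := by positivity
      have e1 : du * x⁻¹ ≤ Y * x⁻¹ := by gcongr
      have e2 : 0 ≤ (1 - ν) * (U * x⁻¹ * x⁻¹) := mul_nonneg (by linarith) (by positivity)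
      have e3 : 0 ≤ (2 * β - 2 * ν - 1) * (Y * x⁻¹) := mul_nonneg (by linarith) (by positivity)
      have e4 : 2 * lam ^ 2 * x * (U * x⁻¹ + 2 * Y) = 2 * lam ^ 2 * U + 4 * lam ^ 2 * x * Y := by
        field_simp
        ring
      have e5 : 0 ≤ 4 * lam ^ 2 * x * Y := by positivity
      rw [e4]
      rw [div_eq_mul_inv] at hdy
      linarith
    have := mul_nonneg (by positivity : 0 ≤ x ^ ν * e) (neg_nonneg.2 key)
    refine le_of_eq_of_le ?_ (neg_nonpos.2 this)
    field_simp
    ring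

lemma locSol_of {t0 m M lam : ℝ} (ht0 : 0 < t0) {b u u' : ℝ → ℝ}
    (hb : ∀ t ≥ t0, m / t ≤ b t ∧ b t ≤ M / t) (hu : IsDampedSol t0 b lam u u')
    {a c : ℝ} (ha : t0 ≤ a) (hac : a ≤ c) : LocSol a c m M lam u u' := by
  obtain ⟨h1, h2, w, hw, h3, h4⟩ := hu
  have hsub : uIcc a c ⊆ uIcc t0 c := by
    rw [uIcc_of_le hac, uIcc_of_le (ha.trans hac)]
    exact Icc_subset_Icc_left ha
  have hwc := hw c (ha.trans hac)
  refine ⟨?_, ?_, ?_⟩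
  · obtain ⟨C, hC⟩ := isCompact_Icc.exists_bound_of_continuousOn
      (h2.mono (Icc_subset_Ici_self.trans (Ici_subset_Ici.2 ha)) : ContinuousOn u' (Icc a c))
    have hC0 : 0 ≤ C := (norm_nonneg _).trans (hC a ⟨le_rfl, hac⟩)
    apply LipschitzOnWith.absolutelyContinuousOnInterval (K := ⟨C, hC0⟩)
    rw [uIcc_of_le hac]
    apply Convex.lipschitzOnWith_of_nnnorm_hasDerivWithin_le (convex_Icc a c) (f' := u')
    · intro x hx
      exact (h1 x (ha.trans hx.1)).hasDerivWithinAt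
    · intro x hx
      exact hC x hx
  · have hac1 := (hwc.absolutelyContinuousOnInterval_intervalIntegral
      (c := t0) (by simp)).mono hsub
    have hac2 : AbsolutelyContinuousOnInterval (fun x => u' t0 + ∫ v in t0..x, w v) a c := by
      refine AbsolutelyContinuousOnInterval.fun_add ?_ hac1
      exact ac_smooth (ht0.trans_le ha) hac (fun x _ => contDiffAt_const)
    rw [absolutelyContinuousOnInterval_iff] at hac2 ⊢
    intro ε hε
    obtain ⟨δ, hδ, H⟩ := hac2 ε hε
    refine ⟨δ, hδ, fun E hE hlt => ?_⟩
    have := H E hE hlt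
    convert this using 2 with i hi
    have hm := hE.1 i hi
    rw [uIcc_of_le hac] at hm
    rw [h3 _ (ha.trans hm.1.1), h3 _ (ha.trans hm.2.1)]
  · have hne : ∀ᵐ x : ℝ, x ≠ t0 := by simp [ae_iff]
    rw [ae_restrict_iff' measurableSet_Ici] at h4
    filter_upwards [hne, h4, hwc.ae_hasDerivAt_integral] with x hx1 hx2 hx3 hxm
    have hxt : t0 ≤ x := ha.trans hxm.1
    have hx0 : 0 < x := ht0.trans_le hxt
    have hlt : t0 < x := lt_of_le_of_ne hxt (Ne.symm hx1)
    refine ⟨h1 x hxt, b x * x, ?_, ?_, ?_⟩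
    · have := (hb x hxt).1
      rwa [div_le_iff₀ hx0] at this
    · have := (hb x hxt).2
      rwa [le_div_iff₀ hx0] at this
    · have hd := hx3 (by rw [uIcc_of_le (ha.trans hac)]; exact ⟨hxt, hxm.2⟩) t0 (by simp)
      have hd2 : HasDerivAt u' (w x) x := by
        refine (hd.const_add (u' t0)).congr_of_eventuallyEq ?_
        filter_upwards [Ioi_mem_nhds hlt] with s hs
        exact h3 s (mem_Ici.2 (le_of_lt hs))
      convert hd2 using 1
      have := hx2 hxt
      field_simp
      linarith

lemma sq_le_quarter {x : ℝ} (h0 : 0 ≤ x) (h : x ≤ 1 / 2) : x ^ 2 ≤ 1 / 4 := by nlinarith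

lemma aux_G {μ y z q S : ℝ} (h0 : 0 ≤ μ) (h2 : μ ≤ 2) (c1 : y ^ 2 + z ^ 2 ≤ S ^ 2)
    (c2 : q ≤ 1 / 4 * z ^ 2) :
    y ^ 2 + q + μ * (y * z) + μ / 2 * z ^ 2 ≤ 9 / 4 * S ^ 2 := by
  linarith [mul_nonneg h0 (sq_nonneg (y - z)), sq_nonneg y, sq_nonneg z,
    mul_nonneg (sub_nonneg.2 h2) (sq_nonneg z), mul_nonneg (sub_nonneg.2 h2) (sq_nonneg y)]

lemma quarter_le_sq {x : ℝ} (h : 1 / 2 ≤ x) : 1 / 4 ≤ x ^ 2 := by nlinarith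

set_option maxHeartbeats 1000000 in
lemma phase1 {t0 t m M lam : ℝ} {u y : ℝ → ℝ} (ht0 : 0 < t0) (ht : t0 ≤ t) (hm : 0 < m)
    (hlam : 0 ≤ lam) (hc : lam * t ≤ 1 / 2) (hs : LocSol t0 t m M lam u y) :
    t ^ (min m 2) * (y t ^ 2 + lam ^ 2 * u t ^ 2) ≤
      exp (3 * m) * (4 * y t0 ^ 2 + (lam ^ 2 + 2 / t0 ^ 2) * u t0 ^ 2) * t0 ^ (min m 2) ∧
    (lam * t = 1 / 2 → t ^ (min m 2) * (y t ^ 2 + lam ^ 2 * u t ^ 2 +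
        min m 2 * (y t * (u t * t⁻¹)) + min m 2 / 2 * (u t * t⁻¹) ^ 2) ≤
      exp (3 * m) * (4 * y t0 ^ 2 + (lam ^ 2 + 2 / t0 ^ 2) * u t0 ^ 2) * t0 ^ (min m 2)) := by
  have htp : 0 < t := ht0.trans_le ht
  have hD : 4 * y t0 ^ 2 + (lam ^ 2 + 2 / t0 ^ 2) * u t0 ^ 2 =
      4 * y t0 ^ 2 + lam ^ 2 * u t0 ^ 2 + 2 * (u t0 * t0⁻¹) ^ 2 := by field_simp; ring
  have hut : lam ^ 2 * u t ^ 2 = (lam * t) ^ 2 * (u t * t⁻¹) ^ 2 := by field_simp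
  rw [hD]
  set D := 4 * y t0 ^ 2 + lam ^ 2 * u t0 ^ 2 + 2 * (u t0 * t0⁻¹) ^ 2 with hDd
  have hD0 : 0 ≤ D := by positivity
  set μ := min m 2 with hμd
  have hμ0 : 0 < μ := lt_min hm (by norm_num)
  have hμm : μ ≤ m := min_le_left _ _
  have hμ2 : μ ≤ 2 := min_le_right _ _
  have hp : 0 < t ^ μ := Real.rpow_pos_of_pos htp μ
  have hp0 : 0 < t0 ^ μ := Real.rpow_pos_of_pos ht0 μ
  rcases le_total m 1 with h1 | h1
  · have hW := phaseP ht0 ht hμ0 (hμm.trans h1) hμm hlam hc hs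
    have hP0 : t0 ^ μ * (y t0 ^ 2 + lam ^ 2 * u t0 ^ 2 + μ / 2 * (u t0 * t0⁻¹) ^ 2) ≤
        t0 ^ μ * D := by
      apply mul_le_mul_of_nonneg_left _ hp0.le
      rw [hDd]
      nlinarith [sq_nonneg (y t0), mul_nonneg (sub_nonneg.2 hμ2) (sq_nonneg (u t0 * t0⁻¹)),
        sq_nonneg (u t0 * t0⁻¹)]
    have hP := hW.trans hP0
    have hDt : 0 ≤ t0 ^ μ * D := by positivity
    have he : 1 + μ ≤ exp (3 * m) := by linarith [add_one_le_exp (3 * m)]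
    have hfin : (1 + μ) * (t ^ μ * (y t ^ 2 + lam ^ 2 * u t ^ 2 + μ / 2 * (u t * t⁻¹) ^ 2)) ≤
        exp (3 * m) * D * t0 ^ μ := by
      calc _ ≤ (1 + μ) * (t0 ^ μ * D) := by gcongr
        _ ≤ exp (3 * m) * (t0 ^ μ * D) := by gcongr
        _ = _ := by ring
    refine ⟨le_trans ?_ hfin, fun hl => le_trans ?_ hfin⟩
    · rw [mul_left_comm (1 + μ)]
      apply mul_le_mul_of_nonneg_left _ hp.le
      have : 0 ≤ y t ^ 2 + lam ^ 2 * u t ^ 2 := by positivity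
      have h2 : 0 ≤ μ / 2 * (u t * t⁻¹) ^ 2 := by positivity
      nlinarith
    · rw [mul_left_comm (1 + μ)]
      apply mul_le_mul_of_nonneg_left _ hp.le
      rw [hut, hl]
      set z := u t * t⁻¹
      nlinarith [mul_nonneg hμ0.le (sq_nonneg (y t - z / 2)), mul_nonneg hμ0.le (sq_nonneg z),
        mul_nonneg (mul_nonneg hμ0.le hμ0.le) (sq_nonneg z)]
  · have hμ1 : 1 ≤ μ := le_min h1 (by norm_num)
    have hW := phaseW (ν := μ / 2) ht0 ht (by linarith) (by linarith) (by linarith) hs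
    set S := |u t| * t⁻¹ + 2 * |y t| with hS
    set S0 := |u t0| * t0⁻¹ + 2 * |y t0| with hS0
    have hSn : 0 ≤ S := by positivity
    have hS0n : 0 ≤ S0 := by positivity
    have hq : 0 < t ^ (μ / 2) := Real.rpow_pos_of_pos htp _
    have hq0 : 0 < t0 ^ (μ / 2) := Real.rpow_pos_of_pos ht0 _
    have hqq : t ^ (μ / 2) * t ^ (μ / 2) = t ^ μ := by
      rw [← Real.rpow_add htp]; congr 1; ring
    have hqq0 : t0 ^ (μ / 2) * t0 ^ (μ / 2) = t0 ^ μ := by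
      rw [← Real.rpow_add ht0]; congr 1; ring
    have hτ0 : 0 ≤ lam * t := by positivity
    have hτ2 : (lam * t) ^ 2 ≤ 1 / 4 := sq_le_quarter hτ0 hc
    have b1 : t ^ (μ / 2) * S * exp (-(1 / 4)) ≤ t0 ^ (μ / 2) * S0 := by
      calc _ ≤ t ^ (μ / 2) * S * exp (-lam ^ 2 * (t * t)) := by
            gcongr
            have : lam ^ 2 * (t * t) = (lam * t) ^ 2 := by ring
            linarith
        _ ≤ _ := hW
        _ ≤ t0 ^ (μ / 2) * S0 * 1 := by
            gcongr
            rw [exp_le_one_iff]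
            have : lam ^ 2 * (t0 * t0) = (lam * t0) ^ 2 := by ring
            linarith [sq_nonneg (lam * t0)]
        _ = _ := by ring
    have b2 : (t ^ (μ / 2) * S * exp (-(1 / 4))) ^ 2 ≤ (t0 ^ (μ / 2) * S0) ^ 2 :=
      pow_le_pow_left₀ (by positivity) b1 2
    have b3 : t ^ μ * S ^ 2 * exp (-(1 / 2)) ≤ t0 ^ μ * S0 ^ 2 := by
      have : exp (-(1 / 2) : ℝ) = exp (-(1 / 4)) * exp (-(1 / 4)) := by
        rw [← exp_add]; norm_num
      rw [this, ← hqq, ← hqq0]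
      refine le_of_eq_of_le ?_ (b2.trans_eq ?_) <;> ring
    have b4 : S0 ^ 2 ≤ 2 * D := by
      have e1 : (u t0 * t0⁻¹) ^ 2 = (|u t0| * t0⁻¹) ^ 2 := by rw [mul_pow, mul_pow, sq_abs]
      have e2 : y t0 ^ 2 = |y t0| ^ 2 := by rw [sq_abs]
      have e3 : 0 ≤ lam ^ 2 * u t0 ^ 2 := by positivity
      rw [hDd, hS0, e1, e2]
      nlinarith [sq_nonneg (|u t0| * t0⁻¹ - 2 * |y t0|), sq_nonneg (|u t0| * t0⁻¹)]
    have b5 : (9 / 2 : ℝ) * exp (1 / 2) ≤ exp (3 * m) := by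
      have e1 : exp (1 / 2 : ℝ) * exp (5 / 2) = exp 3 := by rw [← exp_add]; norm_num
      have e2 : (9 / 2 : ℝ) ≤ exp (5 / 2) := by
        have := quadratic_le_exp_of_nonneg (x := (5 / 2 : ℝ)) (by norm_num)
        norm_num at this ⊢
        linarith
      have e3 : exp 3 ≤ exp (3 * m) := exp_le_exp.2 (by linarith)
      nlinarith [exp_pos (1 / 2 : ℝ)]
    have hfin : t ^ μ * (9 / 4 * S ^ 2) ≤ exp (3 * m) * D * t0 ^ μ := by
      have e1 : exp (-(1 / 2) : ℝ) * exp (1 / 2) = 1 := by rw [← exp_add]; norm_num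
      calc t ^ μ * (9 / 4 * S ^ 2) = 9 / 4 * (t ^ μ * S ^ 2 * (exp (-(1 / 2)) * exp (1 / 2))) := by
            rw [e1]; ring
        _ = 9 / 4 * exp (1 / 2) * (t ^ μ * S ^ 2 * exp (-(1 / 2))) := by ring
        _ ≤ 9 / 4 * exp (1 / 2) * (t0 ^ μ * S0 ^ 2) := by gcongr
        _ ≤ 9 / 4 * exp (1 / 2) * (t0 ^ μ * (2 * D)) := by gcongr
        _ = (9 / 2 * exp (1 / 2)) * (D * t0 ^ μ) := by ring
        _ ≤ exp (3 * m) * (D * t0 ^ μ) := by gcongr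
        _ = _ := by ring
    have c1 : y t ^ 2 + (u t * t⁻¹) ^ 2 ≤ S ^ 2 := by
      have e1 : (u t * t⁻¹) ^ 2 = (|u t| * t⁻¹) ^ 2 := by rw [mul_pow, mul_pow, sq_abs]
      have e2 : y t ^ 2 = |y t| ^ 2 := by rw [sq_abs]
      have e3 : 0 ≤ |u t| * t⁻¹ * |y t| := by positivity
      rw [hS, e1, e2]
      nlinarith [sq_nonneg (|y t|)]
    have c2 : lam ^ 2 * u t ^ 2 ≤ 1 / 4 * (u t * t⁻¹) ^ 2 := by
      rw [hut]; gcongr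
    set z := u t * t⁻¹
    refine ⟨le_trans ?_ hfin, fun hl => le_trans ?_ hfin⟩
    · apply mul_le_mul_of_nonneg_left _ hp.le
      linarith [sq_nonneg z, sq_nonneg (y t), sq_nonneg S]
    · apply mul_le_mul_of_nonneg_left _ hp.le
      exact aux_G hμ0.le hμ2 c1 c2

set_option maxHeartbeats 1000000 in
lemma phase2 {a t m M lam : ℝ} {u y : ℝ → ℝ} (ha : 0 < a) (ht : a ≤ t) (hm : 0 < m) (hmM : m ≤ M)
    (hlam : 0 < lam) (hc : 1 / 2 ≤ lam * a) (hs : LocSol a t m M lam u y) :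
    t ^ (min m 2) * (y t ^ 2 + lam ^ 2 * u t ^ 2) ≤
      exp (2 * m + M * m) * (a ^ (min m 2) * (y a ^ 2 + lam ^ 2 * u a ^ 2 +
        min m 2 * (y a * (u a * a⁻¹)) + min m 2 / 2 * (u a * a⁻¹) ^ 2)) := by
  have htp : 0 < t := ha.trans_le ht
  set μ := min m 2 with hμd
  have hμ0 : 0 < μ := lt_min hm (by norm_num)
  have hμm : μ ≤ m := min_le_left _ _
  have hμ2 : μ ≤ 2 := min_le_right _ _
  have hp : 0 < t ^ μ := Real.rpow_pos_of_pos htp μ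
  have hp0 : 0 < a ^ μ := Real.rpow_pos_of_pos ha μ
  have hM : 0 < M := by linarith
  have hW := phaseG ha ht hμ0 hμ2 hμm hlam hs
  have hut : lam ^ 2 * u t ^ 2 = (lam * t) ^ 2 * (u t * t⁻¹) ^ 2 := by field_simp
  set Ga := y a ^ 2 + lam ^ 2 * u a ^ 2 + μ * (y a * (u a * a⁻¹)) + μ / 2 * (u a * a⁻¹) ^ 2 with hGa
  set Gt := y t ^ 2 + lam ^ 2 * u t ^ 2 + μ * (y t * (u t * t⁻¹)) + μ / 2 * (u t * t⁻¹) ^ 2 with hGt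
  have hGa0 : 0 ≤ Ga := by
    have : 0 ≤ lam ^ 2 * u a ^ 2 := by positivity
    rw [hGa]
    nlinarith [sq_nonneg (y a + μ / 2 * (u a * a⁻¹)),
      mul_nonneg (mul_nonneg hμ0.le (sub_nonneg.2 hμ2)) (sq_nonneg (u a * a⁻¹))]
  have hGt0 : 0 ≤ Gt := by
    have : 0 ≤ lam ^ 2 * u t ^ 2 := by positivity
    rw [hGt]
    nlinarith [sq_nonneg (y t + μ / 2 * (u t * t⁻¹)),
      mul_nonneg (mul_nonneg hμ0.le (sub_nonneg.2 hμ2)) (sq_nonneg (u t * t⁻¹))]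
  have h1 : t ^ μ * Gt ≤ a ^ μ * Ga * exp (M * m) := by
    calc t ^ μ * Gt = t ^ μ * Gt * 1 := by ring
      _ ≤ t ^ μ * Gt * exp (M * μ ^ 2 / (16 * lam ^ 2) * (t⁻¹) ^ 2) := by
          gcongr
          rw [one_le_exp_iff]; positivity
      _ ≤ _ := hW
      _ ≤ _ := by
          apply mul_le_mul_of_nonneg_left _ (by positivity)
          apply exp_le_exp.2
          have e1 : M * μ ^ 2 / (16 * lam ^ 2) * (a⁻¹) ^ 2 = M * μ ^ 2 / (16 * (lam * a) ^ 2) := by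
            field_simp
          have e2 : (1 / 4 : ℝ) ≤ (lam * a) ^ 2 := quarter_le_sq hc
          have e3 : μ ^ 2 ≤ 2 * m := by
            calc μ ^ 2 = μ * μ := by ring
              _ ≤ 2 * m := by gcongr
          rw [e1, div_le_iff₀ (by positivity)]
          calc M * μ ^ 2 ≤ M * (2 * m) := by gcongr
            _ ≤ M * m * (16 * (1 / 4)) := by linarith [mul_pos hM hm]
            _ ≤ _ := by gcongr
  have h2 : y t ^ 2 + lam ^ 2 * u t ^ 2 ≤ exp (2 * m) * Gt := by
    have hτ : 1 / 2 ≤ lam * t := hc.trans (by gcongr)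
    have e2 : (1 / 4 : ℝ) ≤ (lam * t) ^ 2 := quarter_le_sq hτ
    have k1 : (1 - 21 / 50 * μ) * (y t ^ 2 + lam ^ 2 * u t ^ 2) ≤ Gt := by
      rw [hGt, hut]
      set z := u t * t⁻¹
      have e3 : 0 ≤ (21 / 50 * μ) * (((lam * t) ^ 2 - 1 / 4) * z ^ 2) :=
        mul_nonneg (by positivity) (mul_nonneg (by linarith) (sq_nonneg z))
      have e4 : 0 ≤ μ * (21 / 50 * y t ^ 2 + y t * z + (21 / 200 + 1 / 2) * z ^ 2) := by
        apply mul_nonneg hμ0.le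
        nlinarith [sq_nonneg (21 / 50 * y t + z / 2), sq_nonneg z]
      linarith
    have k2 : 1 ≤ exp (2 * m) * (1 - 21 / 50 * μ) := by
      have e1 := quadratic_le_exp_of_nonneg (x := 2 * μ) (by linarith)
      have e2 : exp (2 * μ) ≤ exp (2 * m) := exp_le_exp.2 (by linarith)
      have e3 : 0 < 1 - 21 / 50 * μ := by linarith
      calc (1 : ℝ) ≤ (1 + 2 * μ + (2 * μ) ^ 2 / 2) * (1 - 21 / 50 * μ) := by
            nlinarith [mul_nonneg hμ0.le (sub_nonneg.2 hμ2),
              mul_nonneg (mul_nonneg hμ0.le hμ0.le) (sub_nonneg.2 hμ2)]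
        _ ≤ exp (2 * m) * (1 - 21 / 50 * μ) := by
            gcongr
            linarith
    have hE : 0 ≤ y t ^ 2 + lam ^ 2 * u t ^ 2 := by positivity
    calc y t ^ 2 + lam ^ 2 * u t ^ 2 = 1 * (y t ^ 2 + lam ^ 2 * u t ^ 2) := by ring
      _ ≤ exp (2 * m) * (1 - 21 / 50 * μ) * (y t ^ 2 + lam ^ 2 * u t ^ 2) := by gcongr
      _ = exp (2 * m) * ((1 - 21 / 50 * μ) * (y t ^ 2 + lam ^ 2 * u t ^ 2)) := by ring
      _ ≤ _ := by gcongr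
  calc t ^ μ * (y t ^ 2 + lam ^ 2 * u t ^ 2) ≤ t ^ μ * (exp (2 * m) * Gt) := by gcongr
    _ = exp (2 * m) * (t ^ μ * Gt) := by ring
    _ ≤ exp (2 * m) * (a ^ μ * Ga * exp (M * m)) := by gcongr
    _ = _ := by rw [exp_add]; ring

theorem decay_general_oscillations_ODE
    (t0 m M lam : ℝ) (ht0 : 0 < t0) (hm : 0 < m) (hmM : m ≤ M) (hlam : 0 ≤ lam)
    (b : ℝ → ℝ) (hbmeas : Measurable b)
    (hb : ∀ t ≥ t0, m / t ≤ b t ∧ b t ≤ M / t)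
    (u u' : ℝ → ℝ) (hu : IsDampedSol t0 b lam u u') :
    ∀ t ≥ t0,
      u' t ^ 2 + lam ^ 2 * u t ^ 2 ≤
        Real.exp (m * (M + 8)) *
          (4 * u' t0 ^ 2 + (lam ^ 2 + 2 / t0 ^ 2) * u t0 ^ 2) *
          (t0 / t) ^ (min m 2) := by
  intro t ht
  have htp : 0 < t := ht0.trans_le ht
  have hM : 0 < M := by linarith
  have hp : 0 < t ^ (min m 2) := Real.rpow_pos_of_pos htp _
  have hp0 : 0 < t0 ^ (min m 2) := Real.rpow_pos_of_pos ht0 _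
  have hMm : 0 < M * m := by positivity
  have hL := fun {a c : ℝ} (ha : t0 ≤ a) (hac : a ≤ c) => locSol_of ht0 hb hu ha hac
  rw [Real.div_rpow ht0.le htp.le, ← mul_div_assoc, le_div_iff₀ hp, mul_comm _ (t ^ (min m 2))]
  have hD0 : 0 ≤ 4 * u' t0 ^ 2 + (lam ^ 2 + 2 / t0 ^ 2) * u t0 ^ 2 := by positivity
  rcases le_total (lam * t) (1 / 2) with h | h
  · refine (phase1 ht0 ht hm hlam h (hL le_rfl ht)).1.trans ?_
    gcongr ?_ * _ * _
    apply Real.exp_le_exp.2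
    linarith
  · have hlam0 : 0 < lam := by
      rcases hlam.eq_or_lt with h0 | h0
      · rw [← h0] at h; norm_num at h
      · exact h0
    rcases le_total (1 / 2) (lam * t0) with h2 | h2
    · refine (phase2 ht0 ht hm hmM hlam0 h2 (hL le_rfl ht)).trans ?_
      have hG : u' t0 ^ 2 + lam ^ 2 * u t0 ^ 2 + min m 2 * (u' t0 * (u t0 * t0⁻¹))
          + min m 2 / 2 * (u t0 * t0⁻¹) ^ 2 ≤
          4 * u' t0 ^ 2 + (lam ^ 2 + 2 / t0 ^ 2) * u t0 ^ 2 := by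
        have hD : 4 * u' t0 ^ 2 + (lam ^ 2 + 2 / t0 ^ 2) * u t0 ^ 2 =
          4 * u' t0 ^ 2 + lam ^ 2 * u t0 ^ 2 + 2 * (u t0 * t0⁻¹) ^ 2 := by field_simp; ring
        rw [hD]
        have hμ0 : 0 < min m 2 := lt_min hm (by norm_num)
        have hμ2 : min m 2 ≤ 2 := min_le_right _ _
        set μ := min m 2
        set z := u t0 * t0⁻¹
        nlinarith [mul_nonneg hμ0.le (sq_nonneg (u' t0 - z)), sq_nonneg (u' t0), sq_nonneg z,
          mul_nonneg (sub_nonneg.2 hμ2) (sq_nonneg z),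
          mul_nonneg (sub_nonneg.2 hμ2) (sq_nonneg (u' t0))]
      calc _ ≤ Real.exp (2 * m + M * m) * (t0 ^ (min m 2) *
            (4 * u' t0 ^ 2 + (lam ^ 2 + 2 / t0 ^ 2) * u t0 ^ 2)) := by gcongr
        _ ≤ Real.exp (m * (M + 8)) * (t0 ^ (min m 2) *
            (4 * u' t0 ^ 2 + (lam ^ 2 + 2 / t0 ^ 2) * u t0 ^ 2)) := by
            gcongr ?_ * _
            apply Real.exp_le_exp.2
            linarith
        _ = _ := by ring
    · have hT : lam * (1 / (2 * lam)) = 1 / 2 := by field_simp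
      set T := 1 / (2 * lam) with hTd
      have hT1 : t0 ≤ T := by
        by_contra hcon
        have := mul_lt_mul_of_pos_left (not_le.1 hcon) hlam0
        linarith
      have hT2 : T ≤ t := by
        by_contra hcon
        have := mul_lt_mul_of_pos_left (not_le.1 hcon) hlam0
        linarith
      have g1 := (phase1 ht0 hT1 hm hlam hT.le (hL le_rfl hT1)).2 hT
      refine (phase2 (ht0.trans_le hT1) hT2 hm hmM hlam0 hT.ge (hL hT1 hT2)).trans ?_
      calc _ ≤ Real.exp (2 * m + M * m) * (Real.exp (3 * m) *
            (4 * u' t0 ^ 2 + (lam ^ 2 + 2 / t0 ^ 2) * u t0 ^ 2) * t0 ^ (min m 2)) := by gcongr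
        _ = Real.exp (2 * m + M * m + 3 * m) *
            (4 * u' t0 ^ 2 + (lam ^ 2 + 2 / t0 ^ 2) * u t0 ^ 2) * t0 ^ (min m 2) := by
            rw [Real.exp_add (2 * m + M * m)]; ring
        _ ≤ _ := by
            gcongr ?_ * _ * _
            apply Real.exp_le_exp.2
            linarith
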